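/- Let f₁,…,f_n be monotone linear functions. A permutation σ of [n] is optimal (i.e., β(f^σ) ≤ β(f^ρ) for every permutation ρ) if and only if σ is locally optimal (i.e., β(f^σ) ≤ β(f^μ) for every μ in the neighborhood N(σ)). -/

import Mathlib

/-- A linear function `x ↦ a*x + b`. -/
structure LinFun where
  a : ℝ
  b : ℝ

namespace LinFun

/-- Evaluation of a linear function. -/
def eval (f : LinFun) (x : ℝ) : ℝ := f.a * x + f.b

/-- Composition: `h.comp g` is the linear function `x ↦ h (g x)`. -/
def comp (h g : LinFun) : LinFun := ⟨h.a * g.a, h.a * g.b + h.b⟩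

/-- The identical linear function `x ↦ x`. -/
def idf : LinFun := ⟨1, 0⟩

/-- `f` is the identical function (equivalently, its vector `(β f, 1 - α f)` is `(0,0)`,
i.e. its angle is `⊥`). -/
def IsId (f : LinFun) : Prop := f = idf

/-- The Euclidean norm of the vector `(β f, 1 - α f)` associated to `f`. -/
noncomputable def vecNorm (f : LinFun) : ℝ := Real.sqrt (f.b ^ 2 + (1 - f.a) ^ 2)

/-- The polar angle in `[0, 2π)` of the vector `(β f, 1 - α f)` associated to `f`
(meaningful only when `f` is not identical). -/
noncomputable def theta (f : LinFun) : ℝ :=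
  if 0 ≤ Complex.arg ⟨f.b, 1 - f.a⟩ then Complex.arg ⟨f.b, 1 - f.a⟩
  else Complex.arg ⟨f.b, 1 - f.a⟩ + 2 * Real.pi

end LinFun

/-- Congruence of angles modulo `2π`: `x ≡_{2π} y`. -/
def Cong (x y : ℝ) : Prop := ∃ k : ℤ, x - y = 2 * Real.pi * k

/-- The set `[t1, t2]_{2π}`. -/
def Icc2pi (t1 t2 : ℝ) : Set ℝ :=
  {θ | ∃ l1 l2 : ℝ, Cong l1 t1 ∧ Cong l2 t2 ∧ 0 ≤ l2 - l1 ∧ l2 - l1 < 2 * Real.pi ∧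
    θ ∈ Set.Icc l1 l2}

/-- The set `(t1, t2)_{2π}`. -/
def Ioo2pi (t1 t2 : ℝ) : Set ℝ :=
  {θ | ∃ l1 l2 : ℝ, Cong l1 t1 ∧ Cong l2 t2 ∧ 0 ≤ l2 - l1 ∧ l2 - l1 < 2 * Real.pi ∧
    θ ∈ Set.Ioo l1 l2}

/-- Composite of a list of linear functions: `compList [g₁, …, g_m] = g_m ∘ ⋯ ∘ g₁`. -/
def compList (L : List LinFun) : LinFun := L.foldl (fun acc g => g.comp acc) LinFun.idf

/-- The list `f_{σ(1)}, …, f_{σ(n)}` (0-indexed positions). -/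
def permList {n : ℕ} (f : Fin n → LinFun) (σ : Equiv.Perm (Fin n)) : List LinFun :=
  List.ofFn fun i => f (σ i)

/-- `f^σ = f_{σ(n)} ∘ ⋯ ∘ f_{σ(1)}`. -/
def permComp {n : ℕ} (f : Fin n → LinFun) (σ : Equiv.Perm (Fin n)) : LinFun :=
  compList (permList f σ)

/-- The composite of the functions at the (0-indexed) positions `a, a+1, …, b` of `σ`:
`f_{σ(b)} ∘ ⋯ ∘ f_{σ(a)}` (in 0-indexed notation). -/
def segComp {n : ℕ} (f : Fin n → LinFun) (σ : Equiv.Perm (Fin n)) (a b : ℕ) : LinFun :=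
  compList (((permList f σ).drop a).take (b + 1 - a))

/-- The composite corresponding to the `k`-shift `σ_k` of `σ`:
`f^{σ_k} = f_{σ(k)} ∘ ⋯ ∘ f_{σ(1)} ∘ f_{σ(n)} ∘ ⋯ ∘ f_{σ(k+1)}` (1-indexed notation). -/
def shiftComp {n : ℕ} (f : Fin n → LinFun) (σ : Equiv.Perm (Fin n)) (k : ℕ) : LinFun :=
  compList ((permList f σ).rotate k)

/-- `σ` is a minimum (optimal) permutation for `f₁, …, f_n`. -/
def IsMinimum {n : ℕ} (f : Fin n → LinFun) (σ : Equiv.Perm (Fin n)) : Prop :=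
  ∀ ρ : Equiv.Perm (Fin n), (permComp f σ).b ≤ (permComp f ρ).b

/-- `μ` belongs to the neighbourhood `N(σ)`: it is obtained from `σ` by swapping two
adjacent blocks of positions, `(l, …, m)` and `(m+1, …, r)` (0-indexed, `l ≤ m < r < n`). -/
def InNbhd {n : ℕ} (σ μ : Equiv.Perm (Fin n)) : Prop :=
  ∃ (l m r : ℕ) (_ : l ≤ m) (_ : m < r) (_ : r < n),
    (∀ i : Fin n, (i.val < l ∨ r < i.val) → μ i = σ i) ∧
    (∀ i : Fin n, ∀ _ : l ≤ i.val, ∀ _ : i.val < l + r - m,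
      μ i = σ ⟨i.val + m + 1 - l, by omega⟩) ∧
    (∀ i : Fin n, ∀ _ : l + r - m ≤ i.val, ∀ _ : i.val ≤ r,
      μ i = σ ⟨i.val + m - r, by omega⟩)

/-- `σ` is locally optimal for `f₁, …, f_n`. -/
def LocallyOptimal {n : ℕ} (f : Fin n → LinFun) (σ : Equiv.Perm (Fin n)) : Prop :=
  ∀ μ : Equiv.Perm (Fin n), InNbhd σ μ → (permComp f σ).b ≤ (permComp f μ).b

/-- `σ` is counterclockwise: ignoring the identical functions, some rotation of the sequence
of angles `θ(f_{σ(1)}), …, θ(f_{σ(n)})` is nondecreasing. -/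
def Counterclockwise {n : ℕ} (f : Fin n → LinFun) (σ : Equiv.Perm (Fin n)) : Prop :=
  ∃ c : ℕ, ∀ i j : Fin n, ¬ (f (σ i)).IsId → ¬ (f (σ j)).IsId →
    ((c ≤ i.val ∧ i ≤ j) ∨ (i ≤ j ∧ j.val < c) ∨ (c ≤ i.val ∧ j.val < c)) →
    (f (σ i)).theta ≤ (f (σ j)).theta

/-- `f₁, …, f_n` are colinear: all vectors lie on one line through the origin. -/
def Colinear {n : ℕ} (f : Fin n → LinFun) : Prop :=
  ∃ lam : ℝ, ∀ i : Fin n,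
    (f i).IsId ∨ Cong ((f i).theta) lam ∨ Cong ((f i).theta) (lam + Real.pi)

/-- `f₁, …, f_n` are potentially identical: some counterclockwise permutation composes
to the identical function. -/
def PotentiallyIdentical {n : ℕ} (f : Fin n → LinFun) : Prop :=
  ∃ σ : Equiv.Perm (Fin n), Counterclockwise f σ ∧ (permComp f σ).IsId

/-- The ε-perturbation `f^{(ε)}` of a linear function. -/
noncomputable def epsPert (f : LinFun) (ε : ℝ) : LinFun := if f.a = 0 then ⟨ε, f.b⟩ else f

def cx (p q : LinFun) : ℝ := p.b * (1 - q.a) - q.b * (1 - p.a)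

def cl {ι : Type} (g : ι → LinFun) (L : List ι) : LinFun := compList (L.map g)

theorem cl_nil {ι : Type} (g : ι → LinFun) : cl g [] = LinFun.idf := rfl

theorem foldl_comp (L : List LinFun) (h : LinFun) :
    L.foldl (fun acc g => g.comp acc) h = (compList L).comp h := by
  induction L generalizing h with
  | nil => simp [compList, LinFun.comp, LinFun.idf]
  | cons a L ih =>
    simp only [compList, List.foldl_cons]
    rw [ih, ih]
    simp only [LinFun.comp, LinFun.idf, LinFun.mk.injEq]
    constructor <;> ring

theorem cl_append {ι : Type} (g : ι → LinFun) (A B : List ι) :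
    cl g (A ++ B) = (cl g B).comp (cl g A) := by
  unfold cl
  rw [List.map_append, compList, List.foldl_append, foldl_comp]
  rfl

theorem cl_single {ι : Type} (g : ι → LinFun) (x : ι) : cl g [x] = g x := by
  simp [cl, compList, LinFun.comp, LinFun.idf]

theorem cl_cons {ι : Type} (g : ι → LinFun) (x : ι) (B : List ι) :
    cl g (x :: B) = (cl g B).comp (g x) := by
  rw [← cl_single g x, ← cl_append]; rfl

theorem cl_pos {ι : Type} (g : ι → LinFun) (hg : ∀ t, 0 < (g t).a) (L : List ι) :
    0 < (cl g L).a := by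
  induction L with
  | nil => simp [cl_nil, LinFun.idf]
  | cons x L ih => rw [cl_cons]; exact mul_pos ih (hg x)

theorem swap_diff {ι : Type} (g : ι → LinFun) (P A B S : List ι) :
    (cl g (P ++ (B ++ (A ++ S)))).b - (cl g (P ++ (A ++ (B ++ S)))).b
      = (cl g S).a * cx (cl g A) (cl g B) := by
  simp only [cl_append, LinFun.comp, cx]; ring

def LQ {ι : Type} (g : ι → LinFun) (L : List ι) : Prop :=
  ∀ P A B S, L = P ++ (A ++ (B ++ S)) → 0 ≤ cx (cl g A) (cl g B)

def Opt {ι : Type} (g : ι → LinFun) (L : List ι) : Prop :=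
  ∀ R, R.Perm L → (cl g L).b ≤ (cl g R).b

theorem swap_perm {ι : Type} (P A B S : List ι) :
    (P ++ (B ++ (A ++ S))).Perm (P ++ (A ++ (B ++ S))) := by
  rw [List.perm_append_left_iff, ← List.append_assoc, ← List.append_assoc,
    List.perm_append_right_iff]
  exact List.perm_append_comm

theorem Opt.lq {ι : Type} {g : ι → LinFun} (hg : ∀ t, 0 < (g t).a) {L : List ι}
    (h : Opt g L) : LQ g L := by
  rintro P A B S rfl
  have h1 := h _ (swap_perm P A B S)
  have h2 := swap_diff g P A B S
  have h3 := cl_pos g hg S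
  by_contra hc
  push Not at hc
  have := mul_neg_of_pos_of_neg h3 hc
  linarith

theorem Opt.swap {ι : Type} {g : ι → LinFun} {P A B S : List ι}
    (h : Opt g (P ++ (A ++ (B ++ S)))) (h0 : cx (cl g A) (cl g B) = 0) :
    Opt g (P ++ (B ++ (A ++ S))) := by
  intro R hR
  have h2 := swap_diff g P A B S
  rw [h0, mul_zero] at h2
  have := h R (hR.trans (swap_perm P A B S))
  linarith

/-- orientation of three points -/
def ori (p q r : LinFun) : ℝ :=
  (p.b - q.b) * (r.a - q.a) - (q.b - r.b) * (q.a - p.a)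

/-- cross product of edges -/
def ecr (p q r s : LinFun) : ℝ :=
  (p.b - q.b) * (s.a - r.a) - (r.b - s.b) * (q.a - p.a)

theorem quad (a b c d ha hb hc hd : ℝ) (h : a * ha + b * hb = c * hc + d * hd)
    (hs : a + b = c + d) (a0 : 0 ≤ a) (b0 : 0 < b) (c0 : 0 ≤ c) (d0 : 0 ≤ d)
    (h1 : hc < ha) (h2 : hc < hb) (h3 : hd ≤ hc) : False := by
  have e := congrArg (fun t => t * hc) hs
  have e : (a + b) * hc = (c + d) * hc := e
  nlinarith [mul_nonneg a0 (sub_nonneg.2 h1.le), mul_pos b0 (sub_pos.2 h2),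
    mul_nonneg d0 (sub_nonneg.2 h3)]

theorem hexa (p0 p1 p2 p3 p4 p5 : LinFun)
    (h135 : 0 ≤ ori p1 p3 p5) (h134 : 0 ≤ ori p1 p3 p4) (h124 : 0 ≤ ori p1 p2 p4)
    (h145 : 0 ≤ ori p1 p4 p5) (h024 : 0 ≤ ori p0 p2 p4)
    (h014 : 0 ≤ ori p0 p1 p4) (h235 : 0 ≤ ori p2 p3 p5) (h023 : 0 ≤ ori p0 p2 p3)
    (h245 : 0 ≤ ori p2 p4 p5) (h013 : 0 ≤ ori p0 p1 p3)
    (hxy : ecr p0 p1 p2 p3 < 0) (hyz : ecr p2 p3 p4 p5 < 0) : False := by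
  have h345 : 0 < ori p3 p4 p5 := by
    have : ori p3 p4 p5 = ori p2 p4 p5 - ecr p2 p3 p4 p5 := by unfold ori ecr; ring
    linarith
  have h012 : 0 < ori p0 p1 p2 := by
    have : ori p0 p1 p2 = ori p0 p1 p3 - ecr p0 p1 p2 p3 := by unfold ori ecr; ring
    linarith
  have e10 : ori p2 p3 p1 - ori p2 p3 p0 = - ecr p0 p1 p2 p3 := by unfold ori ecr; ring
  have e45 : ori p2 p3 p4 - ori p2 p3 p5 = - ecr p2 p3 p4 p5 := by unfold ori ecr; ring
  have e0 : ori p2 p3 p0 = ori p0 p2 p3 := by unfold ori; ring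
  have e3 : ori p2 p3 p3 = 0 := by unfold ori; ring
  have e2 : ori p2 p3 p2 = 0 := by unfold ori; ring
  rcases le_total (ori p2 p3 p5) (ori p2 p3 p0) with h | h
  · refine quad (ori p1 p3 p5) (ori p3 p4 p5) (ori p1 p3 p4) (ori p1 p4 p5)
      (ori p2 p3 p4) (ori p2 p3 p1) (ori p2 p3 p5) (ori p2 p3 p3)
      ?_ ?_ h135 h345 h134 h145 ?_ ?_ ?_
    · unfold ori; ring
    · unfold ori; ring
    all_goals linarith
  · refine quad (ori p0 p2 p4) (ori p0 p1 p2) (ori p1 p2 p4) (ori p0 p1 p4)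
      (ori p2 p3 p1) (ori p2 p3 p4) (ori p2 p3 p0) (ori p2 p3 p2)
      ?_ ?_ h024 h012 h124 h014 ?_ ?_ ?_
    · unfold ori; ring
    · unfold ori; ring
    all_goals linarith

theorem ori_cyc (p q r : LinFun) : ori q r p = ori p q r := by unfold ori; ring

theorem LQ.ori {ι : Type} {g : ι → LinFun} (hg : ∀ t, 0 < (g t).a) {L s t u : List ι}
    (h : LQ g L) (h1 : s <:+ L) (h2 : t <:+ s) (h3 : u <:+ t) :
    0 ≤ ori (cl g s) (cl g t) (cl g u) := by
  obtain ⟨P, rfl⟩ := h1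
  obtain ⟨A, rfl⟩ := h2
  obtain ⟨B, rfl⟩ := h3
  have h4 := h P A B u rfl
  have : _root_.ori (cl g (A ++ (B ++ u))) (cl g (B ++ u)) (cl g u)
      = (cl g (B ++ u)).a * (cl g u).a * cx (cl g A) (cl g B) := by
    simp only [cl_append, LinFun.comp, cx, _root_.ori]; ring
  rw [this]
  exact mul_nonneg (mul_pos (cl_pos g hg _) (cl_pos g hg _)).le h4

theorem ecr_eq {ι : Type} (g : ι → LinFun) (x y : ι) (s t : List ι) :
    ecr (cl g (x :: s)) (cl g s) (cl g (y :: t)) (cl g t)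
      = (cl g s).a * (cl g t).a * cx (g x) (g y) := by
  simp only [cl_cons, LinFun.comp, cx, ecr]; ring

def CW (x y z : LinFun) : Prop :=
  (cx x y < 0 ∧ cx y z < 0) ∨ (cx y z < 0 ∧ cx z x < 0) ∨ (cx z x < 0 ∧ cx x y < 0)

theorem LQ.triple {ι : Type} {g : ι → LinFun} (hg : ∀ t, 0 < (g t).a)
    {P B C S : List ι} {x y z : ι}
    (h : LQ g (P ++ x :: (B ++ y :: (C ++ z :: S)))) : ¬ CW (g x) (g y) (g z) := by
  generalize e5 : S = s5 at h
  generalize e4 : z :: s5 = s4 at h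
  generalize e3 : C ++ s4 = s3 at h
  generalize e2 : y :: s3 = s2 at h
  generalize e1 : B ++ s2 = s1 at h
  generalize e0 : x :: s1 = s0 at h
  have f0 : s0 <:+ P ++ s0 := List.suffix_append _ _
  have f01 : s1 <:+ s0 := e0 ▸ List.suffix_cons _ _
  have f12 : s2 <:+ s1 := e1 ▸ List.suffix_append _ _
  have f23 : s3 <:+ s2 := e2 ▸ List.suffix_cons _ _
  have f34 : s4 <:+ s3 := e3 ▸ List.suffix_append _ _
  have f45 : s5 <:+ s4 := e4 ▸ List.suffix_cons _ _
  have f02 := f12.trans f01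
  have f03 := f23.trans f02
  have f04 := f34.trans f03
  have f05 := f45.trans f04
  have f13 := f23.trans f12
  have f14 := f34.trans f13
  have f15 := f45.trans f14
  have f24 := f34.trans f23
  have f25 := f45.trans f24
  have f35 := f45.trans f34
  have f1 := f01.trans f0
  have f2 := f02.trans f0
  have f3 := f03.trans f0
  have o012 := h.ori hg f0 f01 f12
  have o013 := h.ori hg f0 f01 f13
  have o014 := h.ori hg f0 f01 f14
  have o015 := h.ori hg f0 f01 f15
  have o023 := h.ori hg f0 f02 f23
  have o024 := h.ori hg f0 f02 f24
  have o025 := h.ori hg f0 f02 f25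
  have o034 := h.ori hg f0 f03 f34
  have o035 := h.ori hg f0 f03 f35
  have o045 := h.ori hg f0 f04 f45
  have o123 := h.ori hg f1 f12 f23
  have o124 := h.ori hg f1 f12 f24
  have o125 := h.ori hg f1 f12 f25
  have o134 := h.ori hg f1 f13 f34
  have o135 := h.ori hg f1 f13 f35
  have o145 := h.ori hg f1 f14 f45
  have o234 := h.ori hg f2 f23 f34
  have o235 := h.ori hg f2 f23 f35
  have o245 := h.ori hg f2 f24 f45
  have o345 := h.ori hg f3 f34 f45
  have key : ∀ (a b : ι) (s t : List ι), cx (g a) (g b) < 0 →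
      ecr (cl g (a :: s)) (cl g s) (cl g (b :: t)) (cl g t) < 0 := by
    intro a b s t hab
    rw [ecr_eq]
    exact mul_neg_of_pos_of_neg (mul_pos (cl_pos g hg _) (cl_pos g hg _)) hab
  have kxy := key x y s1 s3
  have kyz := key y z s3 s5
  have kzx := key z x s5 s1
  rw [e0, e2] at kxy
  rw [e2, e4] at kyz
  rw [e4, e0] at kzx
  rintro (⟨h1, h2⟩ | ⟨h1, h2⟩ | ⟨h1, h2⟩)
  · exact hexa _ _ _ _ _ _ o135 o134 o124 o145 o024 o014 o235 o023 o245 o013 (kxy h1) (kyz h2)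
  · refine hexa _ _ _ _ _ _ ?_ ?_ ?_ ?_ ?_ ?_ ?_ ?_ ?_ ?_ (kyz h1) (kzx h2) <;>
      first
      | assumption
      | (rw [ori_cyc]; assumption)
      | (rw [ori_cyc, ori_cyc]; assumption)
  · refine hexa _ _ _ _ _ _ ?_ ?_ ?_ ?_ ?_ ?_ ?_ ?_ ?_ ?_ (kzx h1) (kxy h2) <;>
      first
      | assumption
      | (rw [ori_cyc]; assumption)
      | (rw [ori_cyc, ori_cyc]; assumption)

theorem CW.rot {x y z : LinFun} (h : CW x y z) : CW y z x := by
  unfold CW at *; tauto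

theorem cx_swap (x y : LinFun) : cx y x = - cx x y := by unfold cx; ring

theorem cx_all_zero {ι : Type} (g : ι → LinFun) (x : LinFun) (X : List ι)
    (h : ∀ z ∈ X, cx x (g z) = 0) : cx x (cl g X) = 0 := by
  induction X with
  | nil => simp [cl_nil, LinFun.idf, cx]
  | cons z X ih =>
    have h1 := h z (by simp)
    have h2 := ih (fun w hw => h w (by simp [hw]))
    rw [cl_cons]
    have : cx x ((cl g X).comp (g z)) = (cl g X).a * cx x (g z) + cx x (cl g X) := by
      simp only [cx, LinFun.comp]; ring
    rw [this, h1, h2]; ring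

/-- key algebraic identity -/
theorem cx_id (x y z w : LinFun) : cx x y * cx z w = cx z y * cx x w + cx x z * cx y w := by
  unfold cx; ring

theorem gap {ι : Type} {g : ι → LinFun} (hg : ∀ t, 0 < (g t).a)
    {σ1 σ2 : List ι} {x y : ι} (hs : LQ g (σ1 ++ x :: y :: σ2)) (n : ℕ) :
    ∀ (P X S : List ι), X.length = n → (∀ z ∈ X, z ∈ σ1 ∨ z ∈ σ2) →
      Opt g (P ++ x :: (X ++ y :: S)) →
      ∃ P' S', (P' ++ x :: y :: S').Perm (P ++ x :: (X ++ y :: S)) ∧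
        Opt g (P' ++ x :: y :: S') := by
  induction n using Nat.strong_induction_on with
  | _ n ih =>
  intro P X S hn hX hO
  have hL := hO.lq hg
  have hxy : 0 ≤ cx (g x) (g y) := by
    have := hs σ1 [x] [y] σ2 (by simp)
    simpa [cl_single] using this
  have hxX : 0 ≤ cx (g x) (cl g X) := by
    have := hL P [x] X (y :: S) (by simp)
    simpa [cl_single] using this
  have hXy : 0 ≤ cx (cl g X) (g y) := by
    have := hL (P ++ [x]) X [y] S (by simp)
    simpa [cl_single] using this
  -- each z in X
  have hz : ∀ z ∈ X, ¬ CW (g x) (g z) (g y) ∧ ¬ CW (g x) (g y) (g z) := by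
    intro z hzX
    constructor
    · obtain ⟨X1, X2, rfl⟩ := List.append_of_mem hzX
      exact LQ.triple (P := P) (B := X1) (C := X2) (S := S) hg (by simpa using hL)
    · rcases hX z hzX with h | h
      · obtain ⟨X1, X2, rfl⟩ := List.append_of_mem h
        have := LQ.triple (P := X1) (x := z) (B := X2) (y := x) (C := []) (z := y) (S := σ2)
          hg (by simpa using hs)
        exact fun hc => this hc.rot.rot
      · obtain ⟨X1, X2, rfl⟩ := List.append_of_mem h
        exact LQ.triple (P := σ1) (x := x) (B := []) (y := y) (C := X1) (z := z) (S := X2)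
          hg (by simpa using hs)
  rcases hxX.eq_or_lt with hxX0 | hxX
  · refine ⟨P ++ X, S, ?_, ?_⟩
    · have := swap_perm P [x] X (y :: S)
      simpa using this
    · have := Opt.swap (P := P) (A := [x]) (B := X) (S := y :: S) (by simpa using hO)
        (by rw [cl_single]; exact hxX0.symm)
      simpa using this
  rcases hXy.eq_or_lt with hXy0 | hXy
  · refine ⟨P, X ++ S, ?_, ?_⟩
    · have := swap_perm (P ++ [x]) X [y] S
      simpa using this
    · have := Opt.swap (P := P ++ [x]) (A := X) (B := [y]) (S := S) (by simpa using hO)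
        (by rw [cl_single]; exact hXy0.symm)
      simpa using this
  rcases hxy.eq_or_lt with hxy0 | hxy
  · exfalso
    have : cx (g x) (cl g X) = 0 := by
      apply cx_all_zero
      intro z hzX
      obtain ⟨c1, c2⟩ := hz z hzX
      have hid := cx_id (g x) (cl g X) (g z) (g y)
      rw [← hxy0] at hid
      have s1 := cx_swap (g x) (g z)
      have s2 := cx_swap (g z) (g y)
      have s3 := cx_swap (g x) (g y)
      -- cx x X * cx z y = cx x z * cx X y
      rcases lt_trichotomy (cx (g x) (g z)) 0 with h | h | h
      · exfalso
        have : cx (g z) (g y) < 0 := by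
          by_contra hc
          push Not at hc
          nlinarith [mul_nonneg hxX.le hc, mul_neg_of_neg_of_pos h hXy]
        exact c1 (Or.inl ⟨h, this⟩)
      · exact h
      · exfalso
        have : 0 < cx (g z) (g y) := by
          by_contra hc
          push Not at hc
          nlinarith [mul_nonneg hxX.le (neg_nonneg.2 hc), mul_pos h hXy]
        exact c2 (Or.inr (Or.inl ⟨by linarith, by linarith⟩))
    linarith
  -- x, y independent
  cases X with
  | nil => simp [cl_nil, LinFun.idf, cx] at hxX
  | cons z X2 =>
  obtain ⟨c1, c2⟩ := hz z (by simp)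
  have s1 := cx_swap (g x) (g z)
  have s2 := cx_swap (g z) (g y)
  have s3 := cx_swap (g x) (g y)
  have hxz : 0 ≤ cx (g x) (g z) := by
    by_contra hc
    push Not at hc
    exact c1 (Or.inr (Or.inr ⟨by linarith, hc⟩))
  have hzy : 0 ≤ cx (g z) (g y) := by
    by_contra hc
    push Not at hc
    exact c1 (Or.inr (Or.inl ⟨hc, by linarith⟩))
  have hdec : X2.length < n := by rw [← hn]; simp
  have hX2 : ∀ w ∈ X2, w ∈ σ1 ∨ w ∈ σ2 := fun w hw => hX w (by simp [hw])
  rcases hxz.eq_or_lt with hxz0 | hxz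
  · -- swap x with z
    have hO2 : Opt g ((P ++ [z]) ++ x :: (X2 ++ y :: S)) := by
      have := Opt.swap (P := P) (A := [x]) (B := [z]) (S := X2 ++ y :: S) (by simpa using hO)
        (by rw [cl_single, cl_single]; exact hxz0.symm)
      simpa using this
    obtain ⟨P', S', h1, h2⟩ := ih _ hdec (P ++ [z]) X2 S rfl hX2 hO2
    refine ⟨P', S', h1.trans ?_, h2⟩
    have := swap_perm P [x] [z] (X2 ++ y :: S)
    simpa using this
  · have hzy0 : cx (g z) (g y) = 0 := by
      rcases hzy.eq_or_lt with h | h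
      · exact h.symm
      · exact absurd (Or.inr (Or.inl ⟨by linarith, by linarith⟩)) c2
    -- z is parallel to y; swap z X2 with y
    have hX2y : 0 ≤ cx (cl g X2) (g y) := by
      have := hL (P ++ [x] ++ [z]) X2 [y] S (by simp)
      simpa [cl_single] using this
    have hzX2 : 0 ≤ cx (g z) (cl g X2) := by
      have := hL (P ++ [x]) [z] X2 (y :: S) (by simp)
      simpa [cl_single] using this
    have hid := cx_id (g x) (g y) (g z) (cl g X2)
    rw [hzy0] at hid
    have s4 := cx_swap (cl g X2) (g y)
    have e0 : cx (cl g X2) (g y) = 0 := by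
      have h1 := mul_nonneg hxy.le hzX2
      have h2 := mul_nonneg hxz.le hX2y
      have : cx (g x) (g z) * cx (cl g X2) (g y) = 0 := by nlinarith
      rcases mul_eq_zero.1 this with h | h
      · linarith
      · exact h
    exfalso
    have : cx (cl g (z :: X2)) (g y) = (cl g X2).a * cx (g z) (g y) + cx (cl g X2) (g y) := by
      rw [cl_cons]; simp only [cx, LinFun.comp]; ring
    rw [this, hzy0, e0] at hXy
    simp at hXy

theorem exists_opt {ι : Type} (g : ι → LinFun) (L : List ι) :
    ∃ R, R.Perm L ∧ Opt g R := by
  have hfin : {R : List ι | R.Perm L}.Finite := by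
    have := L.permutations.finite_toSet
    simpa [List.mem_permutations] using this
  obtain ⟨R, hR, h⟩ := Set.exists_min_image _ (fun R => (cl g R).b) hfin ⟨L, List.Perm.refl L⟩
  exact ⟨R, hR, fun R' hR' => h R' (hR'.trans hR)⟩

def expd {ι : Type} [DecidableEq ι] (x y : ι) (L : List ι) : List ι :=
  L.flatMap (fun t => if t = x then [x, y] else [t])

theorem expd_append {ι : Type} [DecidableEq ι] (x y : ι) (A B : List ι) :
    expd x y (A ++ B) = expd x y A ++ expd x y B := by simp [expd]

theorem expd_not_mem {ι : Type} [DecidableEq ι] (x y : ι) (A : List ι) (h : x ∉ A) :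
    expd x y A = A := by
  induction A with
  | nil => rfl
  | cons a A ih =>
    simp only [List.mem_cons, not_or] at h
    have := ih h.2
    simp only [expd, List.flatMap_cons] at this ⊢
    rw [this, if_neg (Ne.symm h.1)]; rfl

theorem expd_mid {ι : Type} [DecidableEq ι] (x y : ι) (A B : List ι) (hA : x ∉ A) (hB : x ∉ B) :
    expd x y (A ++ x :: B) = A ++ x :: y :: B := by
  rw [show A ++ x :: B = A ++ ([x] ++ B) by simp, expd_append, expd_append,
    expd_not_mem x y A hA, expd_not_mem x y B hB]
  simp [expd]

theorem cl_expd {ι : Type} [DecidableEq ι] (g : ι → LinFun) (x y : ι) (A : List ι) :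
    cl (Function.update g x ((g y).comp (g x))) A = cl g (expd x y A) := by
  induction A with
  | nil => rfl
  | cons a A ih =>
    rw [show a :: A = [a] ++ A by simp, expd_append, cl_append, cl_append, ih, cl_single]
    congr 1
    by_cases h : a = x
    · subst h
      simp [expd, cl_cons, cl_nil, LinFun.comp, LinFun.idf]
    · simp [expd, h, cl_single]

theorem exists_pair {ι : Type} [DecidableEq ι] {σ ρ : List ι} (hp : ρ.Perm σ) (hnd : σ.Nodup) :
    (∃ σ1 σ2 x y, σ = σ1 ++ x :: y :: σ2 ∧ ρ.idxOf x < ρ.idxOf y) ∨ ρ = σ.reverse := by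
  by_cases h : ∃ σ1 σ2 x y, σ = σ1 ++ x :: y :: σ2 ∧ ρ.idxOf x < ρ.idxOf y
  · exact Or.inl h
  right
  push Not at h
  have hnr : ρ.Nodup := hp.nodup_iff.2 hnd
  have h1 : List.IsChain (fun a b => ρ.idxOf b ≤ ρ.idxOf a) σ := by
    rw [List.isChain_iff_forall_rel_of_append_cons_cons]
    intro a b l1 l2 he
    exact h _ _ _ _ he
  have : IsTrans ι (fun a b => ρ.idxOf b ≤ ρ.idxOf a) := ⟨fun a b c h1 h2 => h2.trans h1⟩
  have h2 : List.Pairwise (fun a b => ρ.idxOf b ≤ ρ.idxOf a) σ := List.isChain_iff_pairwise.1 h1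
  have h3 : List.Pairwise (fun a b => ρ.idxOf b ≤ ρ.idxOf a) ρ.reverse := by
    rw [List.pairwise_reverse, List.pairwise_iff_getElem]
    intro i j hi hj hij
    rw [hnr.idxOf_getElem, hnr.idxOf_getElem]
    exact hij.le
  have h4 : ρ.reverse = σ := by
    refine List.Perm.eq_of_pairwise ?_ h3 h2 ((List.reverse_perm ρ).trans hp)
    intro a b ha hb hab hba
    exact (List.idxOf_inj (by simpa using ha)).1 (le_antisymm hba hab)
  rw [← h4, List.reverse_reverse]

theorem main_list {ι : Type} [DecidableEq ι] (n : ℕ) : ∀ (g : ι → LinFun) (σ : List ι),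
    σ.length = n → (∀ t, 0 < (g t).a) → σ.Nodup → LQ g σ →
    ∀ R, R.Perm σ → (cl g σ).b ≤ (cl g R).b := by
  induction n with
  | zero =>
    intro g σ hn hg hnd hq R hR
    rw [List.length_eq_zero_iff] at hn
    subst hn
    rw [hR.eq_nil]
  | succ n ih =>
    intro g σ hn hg hnd hq R hR
    obtain ⟨ρ, hρ, hO⟩ := exists_opt g σ
    refine le_trans ?_ (hO R (hR.trans hρ.symm))
    -- it suffices to find an adjacent pair
    have fin : ∀ (σ1 σ2 P S : List ι) (x y : ι), σ = σ1 ++ x :: y :: σ2 →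
        (P ++ x :: y :: S).Perm σ → Opt g (P ++ x :: y :: S) → (cl g σ).b ≤ (cl g ρ).b := by
      intro σ1 σ2 P S x y hs hp hO2
      have hnd2 : (P ++ x :: y :: S).Nodup := hp.nodup_iff.2 hnd
      have hle := hO2 ρ (hρ.trans hp.symm)
      refine le_trans ?_ hle
      have n1 : x ∉ σ1 ∧ x ∉ σ2 ∧ x ∉ P ∧ x ∉ S ∧ x ≠ y := by
        subst hs
        simp only [List.nodup_append, List.nodup_cons, List.mem_cons] at hnd hnd2
        grind
      obtain ⟨m1, m2, m3, m4, m5⟩ := n1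
      have E1 := expd_mid x y σ1 σ2 m1 m2
      have E2 := expd_mid x y P S m3 m4
      have := ih (Function.update g x ((g y).comp (g x))) (σ1 ++ x :: σ2)
        (by subst hs; simp at hn ⊢; omega)
        (by
          intro t
          by_cases h : t = x
          · subst h; simp only [Function.update_self]; exact mul_pos (hg _) (hg _)
          · rw [Function.update_of_ne h]; exact hg t)
        (by
          subst hs
          refine hnd.sublist ?_
          simp)
        (by
          intro P' A B S' he
          rw [cl_expd, cl_expd]
          apply hq (expd x y P') _ _ (expd x y S')
          rw [← expd_append, ← expd_append, ← expd_append, ← he, E1, hs])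
        (P ++ x :: S)
        (by
          subst hs
          have h1 : (P ++ x :: y :: S).Perm (y :: (P ++ x :: S)) := by
            have := @List.perm_middle _ y (P ++ [x]) S
            simpa using this
          have h2 : (σ1 ++ x :: y :: σ2).Perm (y :: (σ1 ++ x :: σ2)) := by
            have := @List.perm_middle _ y (σ1 ++ [x]) σ2
            simpa using this
          exact (List.perm_cons y).1 (h1.symm.trans (hp.trans h2)))
      rw [cl_expd, cl_expd, E1, E2, ← hs] at this
      exact this
    rcases exists_pair hρ hnd with ⟨σ1, σ2, x, y, hs, hlt⟩ | hrev
    · have hnr : ρ.Nodup := hρ.nodup_iff.2 hnd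
      have hyρ : y ∈ ρ := hρ.mem_iff.2 (by simp [hs])
      have hxρ : x ∈ ρ := hρ.mem_iff.2 (by simp [hs])
      obtain ⟨A, S, hA⟩ := List.append_of_mem hyρ
      have hxA : x ∈ A := by
        have hyA : y ∉ A := by
          subst hA
          simp only [List.nodup_append, List.nodup_cons, List.mem_cons] at hnr
          grind
        by_contra hc
        rw [hA, List.idxOf_append_of_notMem hc, List.idxOf_append_of_notMem hyA] at hlt
        simp at hlt
      obtain ⟨P, X, hP⟩ := List.append_of_mem hxA
      have hρe : ρ = P ++ x :: (X ++ y :: S) := by rw [hA, hP]; simp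
      obtain ⟨P', S', h1, h2⟩ := gap hg (hs ▸ hq) X.length P X S rfl
        (by
          intro z hz
          have hzs : z ∈ σ := hρ.mem_iff.1 (by simp [hρe, hz])
          rw [hs] at hzs
          rw [hρe] at hnr
          simp only [List.nodup_append, List.nodup_cons, List.mem_cons, List.mem_append] at hnr hzs
          grind) (hρe ▸ hO)
      exact fin σ1 σ2 P' S' x y hs (h1.trans (hρe ▸ hρ)) h2
    · match σ, hn with
      | [x], _ => simp at hrev; rw [hrev]
      | x :: y :: σ2, _ =>
        have hρe : ρ = σ2.reverse ++ ([y] ++ ([x] ++ [])) := by rw [hrev]; simp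
        have c1 := hq [] [x] [y] σ2 (by simp)
        have c2 := hO.lq hg _ _ _ _ hρe
        rw [cl_single, cl_single] at c1 c2
        have c3 := cx_swap (g x) (g y)
        have hO2 : Opt g (σ2.reverse ++ x :: y :: []) := by
          have := Opt.swap (hρe ▸ hO) (by rw [cl_single, cl_single]; linarith)
          simpa using this
        refine fin [] σ2 σ2.reverse [] x y rfl ?_ hO2
        have := swap_perm σ2.reverse [y] [x] []
        rw [← hρe] at this
        exact List.Perm.trans (by simpa using this) hρ

theorem permComp_eq {n : ℕ} (f : Fin n → LinFun) (σ : Equiv.Perm (Fin n)) :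
    permComp f σ = cl f (List.ofFn σ) := by
  unfold permComp permList cl
  rw [List.map_ofFn]; rfl

theorem local_lq {n : ℕ} (f : Fin n → LinFun) (hf : ∀ i, 0 < (f i).a)
    (σ : Equiv.Perm (Fin n)) (h : LocallyOptimal f σ) : LQ f (List.ofFn σ) := by
  intro P A B S he
  rcases A.eq_nil_or_concat with hA | ⟨_, _, hA⟩
  · subst hA; simp [cl_nil, LinFun.idf, cx]
  rcases B.eq_nil_or_concat with hB | ⟨_, _, hB⟩
  · subst hB; simp [cl_nil, LinFun.idf, cx]
  have lA : 0 < A.length := by rw [hA]; simp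
  have lB : 0 < B.length := by rw [hB]; simp
  clear hA hB
  have hlen : P.length + (A.length + (B.length + S.length)) = n := by
    have := congrArg List.length he
    simpa using this.symm
  have hM : (P ++ (B ++ (A ++ S))).length = n := by simp; omega
  have hnd : (P ++ (B ++ (A ++ S))).Nodup := by
    rw [(swap_perm P A B S).nodup_iff, ← he]
    exact List.nodup_ofFn.2 σ.injective
  have hσ : ∀ (i : ℕ) (hi : i < n), σ ⟨i, hi⟩ =
      (P ++ (A ++ (B ++ S)))[i]'(by simp; omega) := by
    intro i hi
    have : (List.ofFn σ)[i]'(by simpa using hi) = σ ⟨i, hi⟩ := by simp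
    rw [← this]
    congr 1
  let m : Fin n → Fin n := fun i => (P ++ (B ++ (A ++ S)))[i.val]'(by rw [hM]; exact i.2)
  have hinj : Function.Injective m := by
    intro i j hij
    have := (List.Nodup.getElem_inj_iff hnd).1 hij
    exact Fin.ext this
  let μ : Equiv.Perm (Fin n) := Equiv.ofBijective m (Finite.injective_iff_bijective.1 hinj)
  have hμ : List.ofFn μ = P ++ (B ++ (A ++ S)) := by
    apply List.ext_getElem
    · simp only [List.length_ofFn, hM]
    · intro i h1 h2
      rw [List.getElem_ofFn]
      rfl
  have hμi : ∀ i : Fin n, μ i = (P ++ (B ++ (A ++ S)))[i.val]'(by rw [hM]; exact i.2) :=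
    fun i => rfl
  have hN : InNbhd σ μ := by
    refine ⟨P.length, P.length + A.length - 1, P.length + A.length + B.length - 1,
      by omega, by omega, by omega, ?_, ?_, ?_⟩
    · intro i hi
      rw [hμi, show σ i = σ ⟨i.val, i.2⟩ from rfl, hσ]
      simp only [List.getElem_append]
      grind
    · intro i h1 h2
      rw [hμi, hσ]
      simp only [List.getElem_append]
      grind
    · intro i h1 h2
      rw [hμi, hσ]
      simp only [List.getElem_append]
      grind
  have h1 := h μ hN
  rw [permComp_eq, permComp_eq, hμ, he] at h1
  have h2 := swap_diff f P A B S
  have h3 := cl_pos f hf S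
  by_contra hc
  push Not at hc
  have := mul_neg_of_pos_of_neg h3 hc
  linarith

/-- global optimality is equivalent to local optimality for monotone
linear functions. -/
theorem stmt12 {n : ℕ} (f : Fin n → LinFun) (hf : ∀ i, 0 < (f i).a)
    (σ : Equiv.Perm (Fin n)) :
    IsMinimum f σ ↔ LocallyOptimal f σ := by
  constructor
  · intro h μ _
    exact h μ
  · intro h ρ
    rw [permComp_eq, permComp_eq]
    refine main_list n f (List.ofFn σ) (by simp) hf (List.nodup_ofFn.2 σ.injective)
      (local_lq f hf σ h) _ ?_
    rw [List.perm_ext_iff_of_nodup (List.nodup_ofFn.2 ρ.injective)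
      (List.nodup_ofFn.2 σ.injective)]
    intro a
    simp only [List.mem_ofFn]
    exact ⟨fun _ => σ.surjective a, fun _ => ρ.surjective a⟩
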